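/- Let f be a continuous real-valued function on (0, ∞) that is non-negative and not identically zero. Then the following are equivalent: (i) f is operator monotone decreasing on (0, ∞), i.e. for all bounded self-adjoint operators A, B on H with spectra contained in (0, ∞), A ≤ B implies f(B) ≤ f(A); (ii) there exist α ≥ 0 and a positive Borel measure μ on [0, ∞) with ∫_{[0,∞)} (1 + λ)^{-1} dμ(λ) < ∞ such that f(x) = α + ∫_{[0,∞)} 1/(x + λ) dμ(λ) for all x ∈ (0, ∞). -/

import Mathlib

open ContinuousLinearMap MeasureTheory

variable {H : Type*} [NormedAddCommGroup H] [InnerProductSpace ℂ H] [CompleteSpace H]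

/-!
Löwner's argument, for decreasing functions. Write `[g]` for the divided difference of `g` at `2n`
positive nodes. Its barycentric weights split the nodes, by sign, into two quadrature rules with `n`
nodes which agree on `q²` for polynomials `q` of degree less than `n`. These polynomials thus carry
one norm and two multiplication operators, diagonal in the values at either half of the nodes, which
are comparable since `[x q²]` is a square. Operator monotonicity of `f` turns this comparison into
`[q² f] ≤ 0`.

Adding the nodes `δ` and `δ⁻¹` and letting `δ → 0` also gives `[x q² f] ≥ 0`. If a combination of
the functions `l ↦ (x + l)⁻¹` is non-negative on `[0, ∞)`, clearing denominators yields a polynomial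
in `-l` that is non-negative on `(-∞, 0]`, hence of the form `q² - x r²`. So `f` defines a positive
functional on the span of these functions, and the measure on `[0, ∞]` representing it is `μ`
together with an atom of mass `α` at `∞`. Conversely, each `x ↦ (x + l)⁻¹` is operator monotone
decreasing, and integration preserves this.
-/

section Polynomial

open Polynomial Filter Topology

/-- The form `q² + X r²`, which certifies that a real polynomial is non-negative on `[0, ∞)`. -/
def IsSqAddXMulSq (p : ℝ[X]) : Prop :=
  ∃ q r : ℝ[X], p = q ^ 2 + X * r ^ 2

namespace IsSqAddXMulSq

lemma const {c : ℝ} (hc : 0 ≤ c) : IsSqAddXMulSq (C c) :=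
  ⟨C √c, 0, by rw [← C_pow, Real.sq_sqrt hc]; ring⟩

lemma X_sub_C {a : ℝ} (ha : a ≤ 0) : IsSqAddXMulSq (X - C a) :=
  ⟨C √(-a), 1, by rw [← C_pow, Real.sq_sqrt (neg_nonneg.2 ha), C_neg]; ring⟩

-- `|x - z|² = (x - |z|)² + 2 (|z| - re z) x`
lemma quadratic (z : ℂ) : IsSqAddXMulSq (X ^ 2 - C (2 * z.re) * X + C (‖z‖ ^ 2)) := by
  refine ⟨X - C ‖z‖, C √(2 * ‖z‖ - 2 * z.re), ?_⟩
  rw [← C_pow, Real.sq_sqrt (by linarith [z.re_le_norm])]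
  simp only [C_mul, C_sub, C_pow, C_ofNat]
  ring

lemma mul {p p' : ℝ[X]} : IsSqAddXMulSq p → IsSqAddXMulSq p' → IsSqAddXMulSq (p * p') := by
  rintro ⟨q, r, rfl⟩ ⟨s, t, rfl⟩
  exact ⟨q * s + X * r * t, q * t - r * s, by ring⟩

lemma eval_nonneg {p : ℝ[X]} (hp : IsSqAddXMulSq p) {x : ℝ} (hx : 0 ≤ x) : 0 ≤ p.eval x := by
  obtain ⟨q, r, rfl⟩ := hp
  simp only [eval_add, eval_pow, eval_mul, eval_X]
  positivity

end IsSqAddXMulSq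

lemma eval_nonneg_of_eval_mul_nonneg {c p : ℝ[X]} (hc : c ≠ 0)
    (hc_nonneg : ∀ x, 0 ≤ x → 0 ≤ c.eval x) (h : ∀ x, 0 ≤ x → 0 ≤ (c * p).eval x)
    {x : ℝ} (hx : 0 ≤ x) : 0 ≤ p.eval x := by
  have hroots : ∀ᶠ y in 𝓝[>] x, y ∉ {y | c.IsRoot y} :=
    ((nhdsGT_le_nhdsNE x).trans (nhdsNE_le_cofinite x))
      (finite_setOfPred_isRoot hc).compl_mem_cofinite
  have hnonneg : ∀ᶠ y in 𝓝[>] x, 0 ≤ p.eval y := by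
    filter_upwards [hroots, self_mem_nhdsWithin] with y hy hxy
    have hy0 : 0 ≤ y := hx.trans (le_of_lt hxy)
    exact nonneg_of_mul_nonneg_right (eval_mul (p := c) ▸ h y hy0)
      ((hc_nonneg y hy0).lt_of_ne' hy)
  exact ge_of_tendsto ((p.continuous.tendsto x).mono_left nhdsWithin_le_nhds) hnonneg

lemma X_sub_C_sq_dvd_of_isLocalMin {p : ℝ[X]} {a : ℝ} (hp : p ≠ 0) (ha : p.IsRoot a)
    (hmin : IsLocalMin (fun x => p.eval x) a) : (X - C a) ^ 2 ∣ p := by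
  have hderiv : p.derivative.IsRoot a := hmin.hasDerivAt_eq_zero (p.hasDerivAt a)
  exact (le_rootMultiplicity_iff hp).1 ((one_lt_rootMultiplicity_iff_isRoot hp).2 ⟨ha, hderiv⟩)

lemma exists_isSqAddXMulSq_dvd {p : ℝ[X]} (hdeg : 0 < p.natDegree)
    (hp : ∀ x, 0 ≤ x → 0 ≤ p.eval x) : ∃ c, IsSqAddXMulSq c ∧ 0 < c.natDegree ∧ c ∣ p := by
  obtain ⟨z, hz⟩ : ∃ z : ℂ, aeval z p = 0 :=
    IsAlgClosed.exists_aeval_eq_zero _ p (natDegree_pos_iff_degree_pos.1 hdeg).ne'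
  by_cases him : z.im = 0
  · obtain ⟨a, rfl⟩ : ∃ a : ℝ, (a : ℂ) = z := ⟨z.re, Complex.ext rfl him.symm⟩
    have ha : p.IsRoot a := by
      rwa [← Complex.coe_algebraMap, aeval_algebraMap_apply_eq_algebraMap_eval,
        map_eq_zero] at hz
    rcases le_or_gt a 0 with ha0 | ha0
    · exact ⟨X - C a, .X_sub_C ha0, by simp, dvd_iff_isRoot.2 ha⟩
    · have hmin : IsLocalMin (fun x => p.eval x) a := by
        filter_upwards [lt_mem_nhds ha0] with x hx
        exact ha.symm ▸ hp x hx.le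
      exact ⟨(X - C a) ^ 2, ⟨X - C a, 0, by ring⟩, by simp,
        X_sub_C_sq_dvd_of_isLocalMin (ne_zero_of_natDegree_gt hdeg) ha hmin⟩
  · refine ⟨_, .quadratic z, ?_, p.quadratic_dvd_of_aeval_eq_zero_im_ne_zero hz him⟩
    have : (X ^ 2 - C (2 * z.re) * X + C (‖z‖ ^ 2)).natDegree = 2 := by compute_degree!
    lia

theorem isSqAddXMulSq_of_eval_nonneg {p : ℝ[X]} (hp : ∀ x, 0 ≤ x → 0 ≤ p.eval x) :
    IsSqAddXMulSq p := by
  induction hn : p.natDegree using Nat.strong_induction_on generalizing p with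
  | _ n ih =>
  subst hn
  rcases Nat.eq_zero_or_pos p.natDegree with hdeg | hdeg
  · obtain ⟨c, rfl⟩ := natDegree_eq_zero.1 hdeg
    exact .const (by simpa using hp 0 le_rfl)
  · obtain ⟨c, hc, hc_deg, p', rfl⟩ := exists_isSqAddXMulSq_dvd hdeg hp
    have hne : c * p' ≠ 0 := ne_zero_of_natDegree_gt hdeg
    have hc0 : c ≠ 0 := left_ne_zero_of_mul hne
    have hlt : p'.natDegree < (c * p').natDegree := by
      rw [natDegree_mul hc0 (right_ne_zero_of_mul hne)]
      lia
    exact hc.mul (ih _ hlt (fun x hx =>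
      eval_nonneg_of_eval_mul_nonneg hc0 (fun _ => hc.eval_nonneg) hp hx) rfl)

lemma natDegree_le_iff_degree_lt_add_one {p : ℝ[X]} {m : ℕ} :
    p.natDegree ≤ m ↔ p.degree < (m + 1 : ℕ) := by
  rw [natDegree_le_iff_coeff_eq_zero, degree_lt_iff_coeff_zero]
  rfl

-- The leading coefficients of `q²` and `X r²` are squares, so they cannot cancel.
lemma degree_sq_add_X_mul_sq (q r : ℝ[X]) :
    (q ^ 2 + X * r ^ 2).degree = max (2 • q.degree) (1 + 2 • r.degree) := by
  by_cases h : q = 0 ∧ r = 0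
  · simp [h.1, h.2]
  rw [degree_add_eq_of_leadingCoeff_add_ne_zero, degree_pow, degree_mul, degree_X, degree_pow]
  rw [leadingCoeff_mul, leadingCoeff_X, one_mul, leadingCoeff_pow, leadingCoeff_pow]
  contrapose! h
  constructor <;> rw [← leadingCoeff_eq_zero] <;> nlinarith

lemma natDegree_le_of_natDegree_sq_add_X_mul_sq_lt {q r : ℝ[X]} {m : ℕ}
    (h : (q ^ 2 + X * r ^ 2).natDegree < 2 * (m + 1)) : q.natDegree ≤ m ∧ r.natDegree ≤ m := by
  replace h : (q ^ 2 + X * r ^ 2).degree < ((2 * (m + 1) : ℕ) : WithBot ℕ) :=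
    degree_le_natDegree.trans_lt (by exact_mod_cast h)
  rw [degree_sq_add_X_mul_sq, max_lt_iff, two_mul, Nat.cast_add, two_nsmul, two_nsmul] at h
  rw [natDegree_le_iff_degree_lt_add_one, natDegree_le_iff_degree_lt_add_one]
  constructor <;> by_contra! hm
  · exact h.1.not_ge (add_le_add hm hm)
  · exact h.2.not_ge (le_add_of_nonneg_of_le zero_le_one (add_le_add hm hm))

end Polynomial

section DividedDifference

open Polynomial

section Field

variable {F : Type*} [Field F] [DecidableEq F] {S : Finset F} {z : F}

/-- The divided difference `g[x₀, …, xₙ]` of `g` at the nodes `S = {x₀, …, xₙ}`, written as the sum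
of the values of `g` against the barycentric weights of `S`. -/
def dividedDifference (S : Finset F) (g : F → F) : F :=
  ∑ x ∈ S, Lagrange.nodalWeight S id x * g x

namespace dividedDifference

lemma congr {g h : F → F} (hgh : ∀ x ∈ S, g x = h x) :
    dividedDifference S g = dividedDifference S h :=
  Finset.sum_congr rfl fun x hx => by rw [hgh x hx]

lemma insert_eq (hz : z ∉ S) (g : F → F) :
    dividedDifference (insert z S) g =
      Lagrange.nodalWeight (insert z S) id z * g z +
        dividedDifference S (fun x => (x - z)⁻¹ * g x) := by
  rw [dividedDifference, Finset.sum_insert hz, dividedDifference]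
  congr 1
  refine Finset.sum_congr rfl fun x hx => ?_
  rw [Lagrange.nodalWeight, Lagrange.nodalWeight,
    Finset.erase_insert_of_ne (ne_of_mem_of_not_mem hx hz).symm,
    Finset.prod_insert (fun h => hz (Finset.mem_of_mem_erase h)), id, id]
  ring

lemma insert_sub_mul (hz : z ∉ S) (g : F → F) :
    dividedDifference (insert z S) (fun x => (x - z) * g x) = dividedDifference S g := by
  rw [insert_eq hz, sub_self, zero_mul, mul_zero, zero_add]
  exact congr fun x hx => inv_mul_cancel_left₀ (sub_ne_zero.2 (ne_of_mem_of_not_mem hx hz)) _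

lemma eval_eq_coeff {p : F[X]} (hp : p.natDegree < S.card) :
    dividedDifference S p.eval = p.coeff (S.card - 1) := by
  rw [Lagrange.coeff_eq_sum Function.injective_id.injOn
    (degree_le_natDegree.trans_lt (Nat.cast_lt.2 hp))]
  refine Finset.sum_congr rfl fun x _ => ?_
  rw [Lagrange.nodalWeight, Finset.prod_inv_distrib, div_eq_inv_mul, id]

end dividedDifference

end Field

variable {S : Finset ℝ} {m : ℕ} {q r : ℝ[X]}

namespace dividedDifference

lemma eval_mul_eval_eq_zero (hS : S.card = 2 * (m + 1)) (hq : q.natDegree ≤ m)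
    (hr : r.natDegree ≤ m) : dividedDifference S (fun x => q.eval x * r.eval x) = 0 := by
  have hdeg : (q * r).natDegree ≤ 2 * m := by
    simpa only [two_mul] using natDegree_mul_le_of_le hq hr
  have hdd := eval_eq_coeff (S := S) (p := q * r) (by lia)
  simp only [eval_mul] at hdd
  exact hdd.trans (coeff_eq_zero_of_natDegree_lt (by lia))

lemma mul_sq_eval_nonneg (hS : S.card = 2 * (m + 1)) (hq : q.natDegree ≤ m) :
    0 ≤ dividedDifference S (fun x => x * q.eval x ^ 2) := by
  have hdeg : (X * q ^ 2).natDegree ≤ 1 + 2 * m :=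
    natDegree_mul_le_of_le natDegree_X_le (natDegree_pow_le_of_le 2 hq)
  have hdd := eval_eq_coeff (S := S) (p := X * q ^ 2) (by lia)
  simp only [eval_mul, eval_X, eval_pow] at hdd
  rw [hdd, hS, show 2 * (m + 1) - 1 = 2 * m + 1 by lia, coeff_X_mul, coeff_pow_of_natDegree_le hq]
  exact sq_nonneg _

end dividedDifference

-- Otherwise the square of a polynomial vanishing at those nodes has a nonzero divided difference.
lemma lt_card_filter_mul_nodalWeight_pos (hS : S.card = 2 * (m + 1)) {e : ℝ} (he : e ≠ 0) :
    m < {x ∈ S | 0 < e * Lagrange.nodalWeight S id x}.card := by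
  by_contra! hcard
  set P := {x ∈ S | 0 < e * Lagrange.nodalWeight S id x}
  have hdeg : (Lagrange.nodal P (id : ℝ → ℝ)).natDegree ≤ m := by rwa [Lagrange.natDegree_nodal]
  have hterm (x : ℝ) (hx : x ∈ S) : e * (Lagrange.nodalWeight S id x *
      ((Lagrange.nodal P id).eval x * (Lagrange.nodal P id).eval x)) ≤ 0 := by
    by_cases hxP : x ∈ P
    · have hroot : (Lagrange.nodal P id).eval x = 0 := Lagrange.eval_nodal_at_node (v := id) hxP
      simp only [hroot, mul_zero, le_refl]
    · rw [← mul_assoc]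
      exact mul_nonpos_of_nonpos_of_nonneg
        (not_lt.1 fun h => hxP (Finset.mem_filter.2 ⟨hx, h⟩)) (mul_self_nonneg _)
  obtain ⟨y, hyS, hyP⟩ : ∃ y ∈ S, y ∉ P := Finset.exists_mem_notMem_of_card_lt_card (by lia)
  have hsum := congrArg (e * ·) (dividedDifference.eval_mul_eval_eq_zero hS hdeg hdeg)
  simp only [dividedDifference, Finset.mul_sum, mul_zero] at hsum
  have hy := (Finset.sum_eq_zero_iff_of_nonpos hterm).1 hsum y hyS
  have hne : (Lagrange.nodal P id).eval y ≠ 0 :=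
    Lagrange.eval_nodal_not_at_node fun i hi h => hyP (h ▸ hi)
  exact mul_ne_zero he (mul_ne_zero (Lagrange.nodalWeight_ne_zero Function.injective_id.injOn hyS)
    (mul_ne_zero hne hne)) hy

lemma card_filter_nodalWeight_pos_and_neg (hS : S.card = 2 * (m + 1)) :
    {x ∈ S | 0 < Lagrange.nodalWeight S id x}.card = m + 1 ∧
      {x ∈ S | Lagrange.nodalWeight S id x < 0}.card = m + 1 := by
  have hpos := lt_card_filter_mul_nodalWeight_pos hS one_ne_zero
  have hneg := lt_card_filter_mul_nodalWeight_pos hS (neg_ne_zero.2 one_ne_zero)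
  simp only [one_mul, neg_one_mul, neg_pos] at hpos hneg
  have hdisj : Disjoint {x ∈ S | 0 < Lagrange.nodalWeight S id x}
      {x ∈ S | Lagrange.nodalWeight S id x < 0} :=
    Finset.disjoint_filter.2 fun _ _ h => h.not_gt
  have hle := Finset.card_le_card (Finset.union_subset (Finset.filter_subset _ S)
    (Finset.filter_subset _ S) : {x ∈ S | 0 < Lagrange.nodalWeight S id x} ∪
      {x ∈ S | Lagrange.nodalWeight S id x < 0} ⊆ S)
  rw [Finset.card_union_of_disjoint hdisj] at hle
  lia

end DividedDifference

section DiagonalOperator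

open InnerProductSpace Polynomial

variable {E : Type*} [NormedAddCommGroup E] [InnerProductSpace ℂ E]
variable {ι κ : Type*} [Fintype ι] [Fintype κ]

lemma exists_orthonormal_of_not_finiteDimensional (hE : ¬ FiniteDimensional ℂ E) :
    ∃ u : ℕ → E, Orthonormal ℂ u := by
  let b := Module.Basis.ofVectorSpace ℂ E
  have : Infinite (Module.Basis.ofVectorSpaceIndex ℂ E) :=
    not_finite_iff_infinite.1 fun _ => hE b.finiteDimensional_of_finite
  exact ⟨_, gramSchmidtNormed_orthonormal
    (b.linearIndependent.comp (Infinite.natEmbedding _) (Infinite.natEmbedding _).injective)⟩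

lemma aeval_apply_of_apply_eq_smul {T : E →L[ℂ] E} {v : E} {a : ℝ} (h : T v = (a : ℂ) • v)
    (p : ℝ[X]) : aeval T p v = ((p.eval a : ℝ) : ℂ) • v := by
  induction p using Polynomial.induction_on with
  | C c => simp [Algebra.algebraMap_eq_smul_one]
  | add p q hp hq => simp [hp, hq, add_smul]
  | monomial n c hn =>
    rw [pow_succ, ← mul_assoc, map_mul, aeval_X, mul_apply_eq_comp, h, map_smul, hn,
      eval_mul_X, Complex.ofReal_mul, mul_smul, smul_comm]

lemma cfc_apply_of_apply_eq_smul {T : H →L[ℂ] H} (hT : IsSelfAdjoint T)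
    (hfin : (spectrum ℝ T).Finite) {v : H} {a : ℝ} (h : T v = (a : ℂ) • v) (f : ℝ → ℝ) :
    cfc f T v = (f a : ℂ) • v := by
  set s := insert a hfin.toFinset
  have heval (x : ℝ) (hx : x ∈ s) : (Lagrange.interpolate s id f).eval x = f x :=
    Lagrange.eval_interpolate_at_node (v := id) f Function.injective_id.injOn hx
  have hcfc : cfc f T = aeval T (Lagrange.interpolate s id f) := by
    rw [← cfc_polynomial _ T hT]
    exact cfc_congr fun x hx => (heval x (by simp [s, hx])).symm
  rw [hcfc, aeval_apply_of_apply_eq_smul h, heval a (Finset.mem_insert_self _ _)]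

/-- The operator acting on each vector `u i` of a finite orthonormal family as multiplication by
`a i`, and as the identity on the orthogonal complement of the family. -/
noncomputable def diagOp (u : ι → E) (a : ι → ℝ) : E →L[ℂ] E :=
  1 + ∑ i, ((a i - 1 : ℝ) : ℂ) • rankOne ℂ (u i) (u i)

namespace diagOp

variable {u : ι → E}

lemma apply_eq (u : ι → E) (a : ι → ℝ) (x : E) :
    diagOp u a x = x + ∑ i, (((a i - 1 : ℝ) : ℂ) * inner ℂ (u i) x) • u i := by
  simp [diagOp, mul_smul]

lemma apply_self (hu : Orthonormal ℂ u) (a : ι → ℝ) (j : ι) :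
    diagOp u a (u j) = (a j : ℂ) • u j := by
  classical
  simp [apply_eq, orthonormal_iff_ite.1 hu, sub_smul]

lemma inner_apply_self (u : ι → E) (a : ι → ℝ) (x : E) :
    inner ℂ (diagOp u a x) x = ((‖x‖ ^ 2 + ∑ i, (a i - 1) * ‖inner ℂ (u i) x‖ ^ 2 : ℝ) : ℂ) := by
  simp only [apply_eq, inner_add_left, sum_inner, inner_smul_left, map_mul, Complex.conj_ofReal,
    mul_assoc, Complex.conj_mul', inner_self_eq_norm_sq_to_K]
  push_cast
  rfl

lemma aeval_eq_zero (hu : Orthonormal ℂ u) (a : ι → ℝ) :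
    aeval (diagOp u a) ((∏ i, (X - C (a i))) * (X - C 1)) = 0 := by
  ext x
  have hsub : aeval (diagOp u a) (X - C (1 : ℝ)) x =
      ∑ i, (((a i - 1 : ℝ) : ℂ) * inner ℂ (u i) x) • u i := by
    simp [apply_eq]
  rw [map_mul, mul_apply_eq_comp, hsub, map_sum]
  refine Finset.sum_eq_zero fun i hi => ?_
  rw [map_smul, aeval_apply_of_apply_eq_smul (apply_self hu a i), eval_prod,
    Finset.prod_eq_zero hi (by simp), Complex.ofReal_zero, zero_smul, smul_zero]

lemma spectrum_subset (hu : Orthonormal ℂ u) (a : ι → ℝ) :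
    spectrum ℝ (diagOp u a) ⊆ insert 1 (Set.range a) := by
  intro z hz
  have : Nontrivial (E →L[ℂ] E) := not_subsingleton_iff_nontrivial.1 fun _ => by
    simp only [spectrum.of_subsingleton, Set.mem_empty_iff_false] at hz
  have hroot : eval z ((∏ i, (X - C (a i))) * (X - C 1)) ∈ spectrum ℝ (0 : E →L[ℂ] E) := by
    rw [← aeval_eq_zero hu a]
    exact spectrum.subset_polynomial_aeval _ _ ⟨z, hz, rfl⟩
  rw [spectrum.zero_eq, Set.mem_singleton_iff, eval_mul, eval_prod, mul_eq_zero,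
    Finset.prod_eq_zero_iff] at hroot
  simp only [eval_sub, eval_X, eval_C, sub_eq_zero, Finset.mem_univ, true_and] at hroot
  exact hroot.symm.imp_right fun ⟨i, hi⟩ => ⟨i, hi.symm⟩

end diagOp

namespace diagOp

variable {u : ι → H} {a : ι → ℝ}

lemma isSelfAdjoint (u : ι → H) (a : ι → ℝ) : IsSelfAdjoint (diagOp u a) := by
  rw [isSelfAdjoint_iff_isSymmetric, LinearMap.isSymmetric_iff_inner_map_self_real]
  intro x
  rw [coe_coe, inner_apply_self, Complex.conj_ofReal]

lemma isStrictlyPositive (hu : Orthonormal ℂ u) (ha : ∀ i, 0 < a i) :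
    IsStrictlyPositive (diagOp u a) := by
  refine CStarAlgebra.isStrictlyPositive_iff_isSelfAdjoint_and_spectrum_pos.2
    ⟨isSelfAdjoint u a, fun x hx => ?_⟩
  rcases spectrum_subset hu a hx with rfl | ⟨i, rfl⟩
  exacts [one_pos, ha i]

lemma le_of_sum_le {w : κ → H} {b : κ → ℝ}
    (h : ∀ x, ∑ i, (a i - 1) * ‖inner ℂ (u i) x‖ ^ 2 ≤ ∑ j, (b j - 1) * ‖inner ℂ (w j) x‖ ^ 2) :
    diagOp u a ≤ diagOp w b := by
  refine (le_def _ _).2 (isPositive_def'.2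
    ⟨(isSelfAdjoint w b).sub (isSelfAdjoint u a), fun x => ?_⟩)
  rw [reApplyInnerSelf_apply, sub_apply, inner_sub_left, inner_apply_self, inner_apply_self,
    ← Complex.ofReal_sub, RCLike.re_to_complex, Complex.ofReal_re]
  linarith [h x]

lemma cfc_apply_self (hu : Orthonormal ℂ u) (a : ι → ℝ) (f : ℝ → ℝ) (i : ι) :
    cfc f (diagOp u a) (u i) = (f (a i) : ℂ) • u i :=
  cfc_apply_of_apply_eq_smul (isSelfAdjoint u a)
    (((Set.finite_range a).insert 1).subset (spectrum_subset hu a)) (apply_self hu a i) f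

lemma inner_cfc_apply_sum (hu : Orthonormal ℂ u) (a : ι → ℝ) (f : ℝ → ℝ) (s : ι → ℝ) :
    inner ℂ (cfc f (diagOp u a) (∑ i, (s i : ℂ) • u i)) (∑ i, (s i : ℂ) • u i) =
      ((∑ i, f (a i) * s i ^ 2 : ℝ) : ℂ) := by
  simp only [map_sum, map_smul, cfc_apply_self hu, smul_smul, hu.inner_sum]
  push_cast
  exact Finset.sum_congr rfl fun i _ => by simp; ring

end diagOp

/-- The vector `∑ i, c i • u i` with real coefficients `c`, as a real-linear function of `c`. -/
noncomputable def realCombination (u : ι → E) : EuclideanSpace ℝ ι →ₗ[ℝ] E :=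
  Fintype.linearCombination ℝ u ∘ₗ (WithLp.linearEquiv 2 ℝ (ι → ℝ)).toLinearMap

lemma realCombination_apply (u : ι → E) (c : EuclideanSpace ℝ ι) :
    realCombination u c = ∑ i, (c i : ℂ) • u i := by
  simp [realCombination, Fintype.linearCombination_apply]

lemma inner_realCombination {u : ι → E} (hu : Orthonormal ℂ u) (c d : EuclideanSpace ℝ ι) :
    inner ℂ (realCombination u c) (realCombination u d) = ((inner ℝ c d : ℝ) : ℂ) := by
  simp only [realCombination_apply, hu.inner_sum, PiLp.inner_apply]
  simp [mul_comm]

lemma realCombination_single [DecidableEq ι] (u : ι → E) (i : ι) :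
    realCombination u (EuclideanSpace.single i 1) = u i := by
  simp [realCombination_apply]

lemma exists_sq_norm_inner_realCombination (u : ι → E) (x : E) :
    ∃ p q : EuclideanSpace ℝ ι, ∀ c : EuclideanSpace ℝ ι,
      ‖inner ℂ (realCombination u c) x‖ ^ 2 = inner ℝ c p ^ 2 + inner ℝ c q ^ 2 := by
  refine ⟨WithLp.toLp 2 fun i => (inner ℂ (u i) x).re,
    WithLp.toLp 2 fun i => (inner ℂ (u i) x).im, fun c => ?_⟩
  rw [Complex.sq_norm, Complex.normSq_apply, ← sq, ← sq]
  simp [realCombination_apply, PiLp.inner_apply, mul_comm]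

section Rotation

variable [DecidableEq κ] (O : EuclideanSpace ℝ ι ≃ₗᵢ[ℝ] EuclideanSpace ℝ κ)

/-- The family spanning the same real subspace as `u` in which the vector with real coefficients
`c` on `u` has coefficients `O c`. -/
noncomputable def rotate (u : ι → E) (j : κ) : E :=
  realCombination u (O.symm (EuclideanSpace.single j 1))

lemma orthonormal_rotate {u : ι → E} (hu : Orthonormal ℂ u) : Orthonormal ℂ (rotate O u) := by
  rw [orthonormal_iff_ite]
  intro j k
  rw [rotate, rotate, inner_realCombination hu, LinearIsometryEquiv.inner_map_map,
    orthonormal_iff_ite.1 (EuclideanSpace.orthonormal_single (𝕜 := ℝ))]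
  split_ifs <;> simp

lemma realCombination_rotate (u : ι → E) (c : EuclideanSpace ℝ ι) :
    realCombination (rotate O u) (O c) = realCombination u c := by
  suffices h : realCombination (rotate O u) =
      realCombination u ∘ₗ O.symm.toLinearEquiv.toLinearMap by
    simp [h]
  refine (EuclideanSpace.basisFun κ ℝ).toBasis.ext fun j => ?_
  simp [realCombination_single, rotate]

lemma sum_mul_sq_norm_inner_le_rotate {a : ι → ℝ} {b : κ → ℝ}
    (hab : ∀ s, ∑ i, a i * s i ^ 2 ≤ ∑ j, b j * O s j ^ 2) (u : ι → E) (x : E) :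
    ∑ i, (a i - 1) * ‖inner ℂ (u i) x‖ ^ 2 ≤
      ∑ j, (b j - 1) * ‖inner ℂ (rotate O u j) x‖ ^ 2 := by
  classical
  obtain ⟨p, q, hpq⟩ := exists_sq_norm_inner_realCombination u x
  have hu (i : ι) : ‖inner ℂ (u i) x‖ ^ 2 = p i ^ 2 + q i ^ 2 := by
    simpa [realCombination_single, EuclideanSpace.inner_single_left] using
      hpq (EuclideanSpace.single i 1)
  have hw (j : κ) : ‖inner ℂ (rotate O u j) x‖ ^ 2 = O p j ^ 2 + O q j ^ 2 := by
    simp only [rotate, hpq, LinearIsometryEquiv.inner_map_eq_flip, LinearIsometryEquiv.symm_symm,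
      EuclideanSpace.inner_single_left, map_one, one_mul]
  have hsub (s : EuclideanSpace ℝ ι) :
      ∑ i, (a i - 1) * s i ^ 2 ≤ ∑ j, (b j - 1) * O s j ^ 2 := by
    have hnorm : ∑ i, s i ^ 2 = ∑ j, O s j ^ 2 := by
      rw [← EuclideanSpace.real_norm_sq_eq, ← EuclideanSpace.real_norm_sq_eq, O.norm_map]
    simp only [sub_one_mul, Finset.sum_sub_distrib]
    linarith [hab s]
  simp only [hu, hw, mul_add, Finset.sum_add_distrib]
  exact add_le_add (hsub p) (hsub q)

end Rotation

theorem sum_map_mul_sq_le_of_antitoneOn_cfc (hinf : ¬ FiniteDimensional ℂ H) {f : ℝ → ℝ}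
    (hf : AntitoneOn (cfc f : (H →L[ℂ] H) → H →L[ℂ] H) {T | IsStrictlyPositive T})
    (O : EuclideanSpace ℝ ι ≃ₗᵢ[ℝ] EuclideanSpace ℝ κ) {a : ι → ℝ} {b : κ → ℝ}
    (ha : ∀ i, 0 < a i) (hb : ∀ j, 0 < b j)
    (hab : ∀ s, ∑ i, a i * s i ^ 2 ≤ ∑ j, b j * O s j ^ 2) (s : EuclideanSpace ℝ ι) :
    ∑ j, f (b j) * O s j ^ 2 ≤ ∑ i, f (a i) * s i ^ 2 := by
  classical
  obtain ⟨v, hv⟩ := exists_orthonormal_of_not_finiteDimensional hinf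
  have hu : Orthonormal ℂ fun i => v (Fintype.equivFin ι i) :=
    hv.comp _ (Fin.val_injective.comp (Fintype.equivFin ι).injective)
  set u := fun i => v (Fintype.equivFin ι i)
  have hw := orthonormal_rotate O hu
  have hle := hf (diagOp.isStrictlyPositive hu ha) (diagOp.isStrictlyPositive hw hb)
    (diagOp.le_of_sum_le (sum_mul_sq_norm_inner_le_rotate O hab u))
  have hinner := ((le_def _ _).1 hle).inner_nonneg_left (realCombination u s)
  rw [sub_apply, inner_sub_left, realCombination_apply, diagOp.inner_cfc_apply_sum hu,
    ← realCombination_apply, ← realCombination_rotate O, realCombination_apply,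
    diagOp.inner_cfc_apply_sum hw, ← Complex.ofReal_sub] at hinner
  exact sub_nonneg.1 (Complex.zero_le_real.1 hinner)

end DiagonalOperator

section Quadrature

open Polynomial

variable {ι κ : Type*} {a α : ι → ℝ} {b β : κ → ℝ}

/-- The values of a polynomial at the nodes `a` of a quadrature rule with weights `α`, scaled so
that the Euclidean norm of the result is the `L²` norm for the rule. -/
noncomputable def weightedEval (a α : ι → ℝ) : ℝ[X] →ₗ[ℝ] EuclideanSpace ℝ ι :=
  (WithLp.linearEquiv 2 ℝ (ι → ℝ)).symm.toLinearMap ∘ₗ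
    LinearMap.pi fun i => √(α i) • Polynomial.leval (a i)

lemma weightedEval_apply (a α : ι → ℝ) (q : ℝ[X]) (i : ι) :
    weightedEval a α q i = √(α i) * q.eval (a i) := rfl

lemma sq_weightedEval_apply (hα : ∀ i, 0 < α i) (q : ℝ[X]) (i : ι) :
    weightedEval a α q i ^ 2 = α i * q.eval (a i) ^ 2 := by
  rw [weightedEval_apply, mul_pow, Real.sq_sqrt (hα i).le]

variable [Fintype ι] [Fintype κ]

/-- The interpolation polynomial with prescribed image under `weightedEval a α`. -/
noncomputable def weightedInterpolate [DecidableEq ι] (a α : ι → ℝ) :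
    EuclideanSpace ℝ ι →ₗ[ℝ] ℝ[X] :=
  Lagrange.interpolate Finset.univ a ∘ₗ
    LinearMap.pi fun i => (√(α i))⁻¹ • PiLp.projₗ 2 (fun _ => ℝ) i

section

variable [DecidableEq ι]

lemma degree_weightedInterpolate_lt (ha : a.Injective) (α : ι → ℝ) (s : EuclideanSpace ℝ ι) :
    (weightedInterpolate a α s).degree < Fintype.card ι :=
  Lagrange.degree_interpolate_lt _ ha.injOn

lemma weightedEval_weightedInterpolate (ha : a.Injective) (hα : ∀ i, 0 < α i)
    (s : EuclideanSpace ℝ ι) : weightedEval a α (weightedInterpolate a α s) = s := by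
  ext i
  rw [weightedEval_apply, weightedInterpolate, LinearMap.comp_apply,
    Lagrange.eval_interpolate_at_node _ ha.injOn (Finset.mem_univ i)]
  exact mul_inv_cancel_left₀ (Real.sqrt_pos.2 (hα i)).ne' _

lemma weightedInterpolate_weightedEval (ha : a.Injective) (hα : ∀ i, 0 < α i) {q : ℝ[X]}
    (hq : q.degree < Fintype.card ι) : weightedInterpolate a α (weightedEval a α q) = q :=
  (Lagrange.eq_interpolate_of_eval_eq _ ha.injOn hq fun i _ =>
    (inv_mul_cancel_left₀ (Real.sqrt_pos.2 (hα i)).ne' _).symm).symm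

end

lemma exists_linearIsometryEquiv_weightedEval (ha : a.Injective) (hα : ∀ i, 0 < α i)
    (hβ : ∀ j, 0 < β j) (hcard : Fintype.card ι = Fintype.card κ)
    (hαβ : ∀ q : ℝ[X], q.degree < Fintype.card ι →
      ∑ i, α i * q.eval (a i) ^ 2 = ∑ j, β j * q.eval (b j) ^ 2) :
    ∃ O : EuclideanSpace ℝ ι ≃ₗᵢ[ℝ] EuclideanSpace ℝ κ, ∀ q : ℝ[X], q.degree < Fintype.card ι →
      O (weightedEval a α q) = weightedEval b β q := by
  classical
  have hnorm (s : EuclideanSpace ℝ ι) :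
      ‖(weightedEval b β ∘ₗ weightedInterpolate a α) s‖ = ‖s‖ := by
    rw [← sq_eq_sq₀ (norm_nonneg _) (norm_nonneg _)]
    conv_rhs => rw [← weightedEval_weightedInterpolate ha hα s]
    simp only [EuclideanSpace.real_norm_sq_eq, LinearMap.comp_apply, sq_weightedEval_apply hα,
      sq_weightedEval_apply hβ, hαβ _ (degree_weightedInterpolate_lt ha α s)]
  let O : EuclideanSpace ℝ ι →ₗᵢ[ℝ] EuclideanSpace ℝ κ := ⟨_, hnorm⟩
  refine ⟨O.toLinearIsometryEquiv (by simpa using hcard), fun q hq => ?_⟩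
  exact congrArg (weightedEval b β) (weightedInterpolate_weightedEval ha hα hq)

theorem sum_mul_sq_eval_mul_le_of_antitoneOn_cfc (hinf : ¬ FiniteDimensional ℂ H) {f : ℝ → ℝ}
    (hf : AntitoneOn (cfc f : (H →L[ℂ] H) → H →L[ℂ] H) {T | IsStrictlyPositive T})
    (ha_inj : a.Injective) (ha : ∀ i, 0 < a i) (hb : ∀ j, 0 < b j) (hα : ∀ i, 0 < α i)
    (hβ : ∀ j, 0 < β j) (hcard : Fintype.card ι = Fintype.card κ)
    (hαβ : ∀ q : ℝ[X], q.degree < Fintype.card ι →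
      ∑ i, α i * q.eval (a i) ^ 2 = ∑ j, β j * q.eval (b j) ^ 2)
    (hle : ∀ q : ℝ[X], q.degree < Fintype.card ι →
      ∑ i, α i * (a i * q.eval (a i) ^ 2) ≤ ∑ j, β j * (b j * q.eval (b j) ^ 2))
    {q : ℝ[X]} (hq : q.degree < Fintype.card ι) :
    ∑ j, β j * (q.eval (b j) ^ 2 * f (b j)) ≤ ∑ i, α i * (q.eval (a i) ^ 2 * f (a i)) := by
  classical
  obtain ⟨O, hO⟩ := exists_linearIsometryEquiv_weightedEval ha_inj hα hβ hcard hαβ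
  have hab (s : EuclideanSpace ℝ ι) : ∑ i, a i * s i ^ 2 ≤ ∑ j, b j * O s j ^ 2 := by
    have hdeg := degree_weightedInterpolate_lt ha_inj α s
    rw [← weightedEval_weightedInterpolate ha_inj hα s, hO _ hdeg]
    simpa only [sq_weightedEval_apply hα, sq_weightedEval_apply hβ, mul_left_comm]
      using hle _ hdeg
  have hmap := sum_map_mul_sq_le_of_antitoneOn_cfc hinf hf O ha hb hab (weightedEval a α q)
  rw [hO q hq] at hmap
  simpa only [sq_weightedEval_apply hα, sq_weightedEval_apply hβ, mul_left_comm (f _),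
    mul_comm (f _)] using hmap

end Quadrature

section LoewnerCondition

open Polynomial Filter Topology

variable {S : Finset ℝ} {m : ℕ} {f : ℝ → ℝ}

/-- Löwner's condition for `f` to be operator monotone decreasing on `(0, ∞)`: for an even number of
nodes in `(0, ∞)`, the divided difference of `q² f` is non-positive whenever the degree of `q` is
less than half the number of nodes. -/
def LoewnerNonpos (f : ℝ → ℝ) : Prop :=
  ∀ ⦃S : Finset ℝ⦄ ⦃m : ℕ⦄, (∀ x ∈ S, 0 < x) → S.card = 2 * (m + 1) →
    ∀ ⦃q : ℝ[X]⦄, q.natDegree ≤ m → dividedDifference S (fun x => q.eval x ^ 2 * f x) ≤ 0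

namespace dividedDifference

lemma const_mul (S : Finset ℝ) (c : ℝ) (g : ℝ → ℝ) :
    dividedDifference S (fun x => c * g x) = c * dividedDifference S g := by
  simp only [dividedDifference, Finset.mul_sum, mul_left_comm c]

lemma eq_sum_pos_sub_sum_neg (S : Finset ℝ) (g : ℝ → ℝ) :
    dividedDifference S g =
      ∑ x ∈ S with 0 < Lagrange.nodalWeight S id x, Lagrange.nodalWeight S id x * g x -
        ∑ x ∈ S with Lagrange.nodalWeight S id x < 0, -Lagrange.nodalWeight S id x * g x := by
  rw [Finset.sum_filter, Finset.sum_filter, ← Finset.sum_sub_distrib]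
  refine Finset.sum_congr rfl fun x _ => ?_
  rcases lt_trichotomy (Lagrange.nodalWeight S id x) 0 with hx | hx | hx
  · simp [hx, hx.not_gt]
  · simp [hx]
  · simp [hx, hx.not_gt]

end dividedDifference

-- The nodes with negative weight and those with positive weight carry two quadrature rules which
-- agree in degree less than `2 * m + 1`.
theorem loewnerNonpos_of_antitoneOn_cfc (hinf : ¬ FiniteDimensional ℂ H)
    (hf : AntitoneOn (cfc f : (H →L[ℂ] H) → H →L[ℂ] H) {T | IsStrictlyPositive T}) :
    LoewnerNonpos f := by
  intro S m hS hm q hq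
  obtain ⟨hpos, hneg⟩ := card_filter_nodalWeight_pos_and_neg hm
  set w := Lagrange.nodalWeight S id
  have hsplit (g : ℝ → ℝ) : dividedDifference S g =
      ∑ x : {x ∈ S | 0 < w x}, w x * g x - ∑ x : {x ∈ S | w x < 0}, -w x * g x := by
    rw [dividedDifference.eq_sum_pos_sub_sum_neg, Finset.sum_coe_sort _ fun x => w x * g x,
      Finset.sum_coe_sort _ fun x => -w x * g x]
  have hdeg {p : ℝ[X]} : p.degree < Fintype.card {x ∈ S | w x < 0} ↔ p.natDegree ≤ m := by
    rw [Fintype.card_coe, hneg, natDegree_le_iff_degree_lt_add_one]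
  have hle := sum_mul_sq_eval_mul_le_of_antitoneOn_cfc hinf hf
    (a := fun x : {x ∈ S | w x < 0} => x) (α := fun x => -w x)
    (b := fun x : {x ∈ S | 0 < w x} => x) (β := fun x => w x) Subtype.val_injective
    (fun x => hS x (Finset.mem_filter.1 x.2).1) (fun x => hS x (Finset.mem_filter.1 x.2).1)
    (fun x => neg_pos.2 (Finset.mem_filter.1 x.2).2) (fun x => (Finset.mem_filter.1 x.2).2)
    (by rw [Fintype.card_coe, Fintype.card_coe, hpos, hneg])
    (fun p hp => ?_) (fun p hp => ?_) (hdeg.2 hq)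
  · rw [hsplit]
    exact sub_nonpos.2 hle
  · have hzero := dividedDifference.eval_mul_eval_eq_zero hm (hdeg.1 hp) (hdeg.1 hp)
    simp only [← sq] at hzero
    exact (sub_eq_zero.1 ((hsplit _).symm.trans hzero)).symm
  · exact sub_nonneg.1 ((dividedDifference.mul_sq_eval_nonneg hm (hdeg.1 hp)).trans_eq (hsplit _))

namespace LoewnerNonpos

-- Löwner's condition for `S` with the two further nodes `δ` and `δ⁻¹` and `q = (X - δ) r`.
lemma dividedDifference_div_mul_sq_nonneg (hf : LoewnerNonpos f) (hf0 : ∀ x, 0 < x → 0 ≤ f x)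
    (hS : ∀ x ∈ S, 0 < x) (hm : S.card = 2 * (m + 1)) {r : ℝ[X]} (hr : r.natDegree ≤ m) {δ : ℝ}
    (hδ : 0 < δ) (hδ_one : δ < 1) (hδ_lt : ∀ x ∈ S, δ < x) (hlt_δ : ∀ x ∈ S, x < δ⁻¹) :
    0 ≤ dividedDifference S (fun x => (1 - δ * x)⁻¹ * ((x - δ) * (r.eval x ^ 2 * f x))) := by
  have hδ' : δ⁻¹ ∉ S := fun h => (hlt_δ _ h).false
  have hδδ' : δ ∉ insert δ⁻¹ S := by
    rw [Finset.mem_insert, not_or]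
    exact ⟨(hδ_one.trans ((one_lt_inv₀ hδ).2 hδ_one)).ne, fun h => (hδ_lt _ h).false⟩
  have hloewner := hf (S := insert δ (insert δ⁻¹ S)) (m := m + 1) (q := (X - C δ) * r)
    (by simpa using ⟨hδ, hS⟩)
    (by rw [Finset.card_insert_of_notMem hδδ', Finset.card_insert_of_notMem hδ', hm]; ring)
    ((natDegree_mul_le_of_le (natDegree_X_sub_C_le δ) hr).trans_eq (add_comm 1 m))
  have hweight : 0 ≤ Lagrange.nodalWeight (insert δ⁻¹ S) id δ⁻¹ := by
    rw [Lagrange.nodalWeight, Finset.erase_insert hδ']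
    exact Finset.prod_nonneg fun x hx => inv_nonneg.2 (sub_nonneg.2 (hlt_δ x hx).le)
  have hlast : 0 ≤ Lagrange.nodalWeight (insert δ⁻¹ S) id δ⁻¹ *
      ((δ⁻¹ - δ) * (r.eval δ⁻¹ ^ 2 * f δ⁻¹)) :=
    mul_nonneg hweight (mul_nonneg
      (sub_nonneg.2 (hδ_one.trans ((one_lt_inv₀ hδ).2 hδ_one)).le)
      (mul_nonneg (sq_nonneg _) (hf0 _ (inv_pos.2 hδ))))
  have hrescale : dividedDifference S
      (fun x => (x - δ⁻¹)⁻¹ * ((x - δ) * (r.eval x ^ 2 * f x))) =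
        -δ * dividedDifference S
          (fun x => (1 - δ * x)⁻¹ * ((x - δ) * (r.eval x ^ 2 * f x))) := by
    rw [← dividedDifference.const_mul]
    refine dividedDifference.congr fun x _ => ?_
    rw [show x - δ⁻¹ = -δ⁻¹ * (1 - δ * x) by field_simp; ring, mul_inv, inv_neg, inv_inv, mul_assoc]
  simp only [eval_mul, eval_sub, eval_X, eval_C, mul_pow, sq (_ - δ), mul_assoc] at hloewner
  rw [dividedDifference.insert_sub_mul hδδ', dividedDifference.insert_eq hδ', hrescale] at hloewner
  exact nonneg_of_mul_nonneg_right (by linarith) hδ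

lemma dividedDifference_mul_sq_nonneg (hf : LoewnerNonpos f) (hf0 : ∀ x, 0 < x → 0 ≤ f x)
    (hS : ∀ x ∈ S, 0 < x) (hm : S.card = 2 * (m + 1)) {r : ℝ[X]} (hr : r.natDegree ≤ m) :
    0 ≤ dividedDifference S (fun x => x * (r.eval x ^ 2 * f x)) := by
  have hlim : Tendsto (fun δ : ℝ => dividedDifference S
      (fun x => (1 - δ * x)⁻¹ * ((x - δ) * (r.eval x ^ 2 * f x)))) (𝓝[>] 0)
      (𝓝 (dividedDifference S (fun x => x * (r.eval x ^ 2 * f x)))) := by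
    refine tendsto_nhdsWithin_of_tendsto_nhds (tendsto_finsetSum _ fun x _ => ?_)
    have hcont : ContinuousAt (fun δ : ℝ => (1 - δ * x)⁻¹ * ((x - δ) * (r.eval x ^ 2 * f x))) 0 :=
      ((by fun_prop : ContinuousAt (fun δ : ℝ => 1 - δ * x) 0).inv₀ (by simp)).mul (by fun_prop)
    simpa using hcont.tendsto.const_mul (Lagrange.nodalWeight S id x)
  refine ge_of_tendsto hlim ?_
  have hδ_lt : ∀ᶠ δ : ℝ in 𝓝[>] 0, ∀ x ∈ S, δ < x :=
    (eventually_all_finset S).2 fun x hx => nhdsWithin_le_nhds (gt_mem_nhds (hS x hx))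
  have hlt_δ : ∀ᶠ δ : ℝ in 𝓝[>] 0, ∀ x ∈ S, x < δ⁻¹ :=
    (eventually_all_finset S).2 fun x _ => tendsto_inv_nhdsGT_zero.eventually_gt_atTop x
  filter_upwards [self_mem_nhdsWithin, nhdsWithin_le_nhds (gt_mem_nhds one_pos), hδ_lt, hlt_δ]
    with δ hδ hδ_one hδ_lt hlt_δ
  exact hf.dividedDifference_div_mul_sq_nonneg hf0 hS hm hr hδ hδ_one hδ_lt hlt_δ

lemma dividedDifference_eval_mul_nonpos (hf : LoewnerNonpos f) (hf0 : ∀ x, 0 < x → 0 ≤ f x)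
    (hS : ∀ x ∈ S, 0 < x) (hm : S.card = 2 * (m + 1)) {p : ℝ[X]} (hp_deg : p.natDegree < S.card)
    (hp : ∀ x, x ≤ 0 → 0 ≤ p.eval x) : dividedDifference S (fun x => p.eval x * f x) ≤ 0 := by
  obtain ⟨q, r, hqr⟩ := isSqAddXMulSq_of_eval_nonneg (p := p.comp (-X)) fun x hx => by
    simpa using hp (-x) (neg_nonpos.2 hx)
  have hdeg : (q ^ 2 + X * r ^ 2).natDegree < 2 * (m + 1) := by
    rwa [← hqr, natDegree_comp, natDegree_neg, natDegree_X, mul_one, ← hm]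
  obtain ⟨hq, hr⟩ := natDegree_le_of_natDegree_sq_add_X_mul_sq_lt hdeg
  have hp_eval (x : ℝ) :
      p.eval x = (q.comp (-X)).eval x ^ 2 - x * (r.comp (-X)).eval x ^ 2 := by
    have := congrArg (eval (-x)) hqr
    simpa [← sub_eq_add_neg] using this
  have hsq := hf hS hm (q := q.comp (-X)) (by simpa [natDegree_comp] using hq)
  have hXsq := hf.dividedDifference_mul_sq_nonneg hf0 hS hm (r := r.comp (-X))
    (by simpa [natDegree_comp] using hr)
  calc dividedDifference S (fun x => p.eval x * f x)
    _ = dividedDifference S (fun x => (q.comp (-X)).eval x ^ 2 * f x) -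
        dividedDifference S (fun x => x * ((r.comp (-X)).eval x ^ 2 * f x)) := by
      simp only [dividedDifference, ← Finset.sum_sub_distrib, hp_eval]
      exact Finset.sum_congr rfl fun x _ => by ring
    _ ≤ 0 := by linarith

-- Clearing denominators: `p (-l) = (∏ x ∈ S, (x + l)) * ∑ x ∈ S, c x * (x + l)⁻¹`.
lemma sum_mul_nonneg_of_card_eq (hf : LoewnerNonpos f) (hf0 : ∀ x, 0 < x → 0 ≤ f x)
    (hS : ∀ x ∈ S, 0 < x) (hm : S.card = 2 * (m + 1)) {c : ℝ → ℝ}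
    (hc : ∀ l, 0 ≤ l → 0 ≤ ∑ x ∈ S, c x * (x + l)⁻¹) : 0 ≤ ∑ x ∈ S, c x * f x := by
  have hweight (x : ℝ) (hx : x ∈ S) : Lagrange.nodalWeight S id x ≠ 0 :=
    Lagrange.nodalWeight_ne_zero Function.injective_id.injOn hx
  set p := Lagrange.interpolate S id fun x => -c x / Lagrange.nodalWeight S id x
  have hp_deg : p.natDegree < S.card := by
    rw [← Nat.le_sub_one_iff_lt (by lia), natDegree_le_iff_degree_lt_add_one,
      Nat.sub_add_cancel (by lia)]
    exact Lagrange.degree_interpolate_lt _ Function.injective_id.injOn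
  have hp_eval (x : ℝ) (hx : x ∈ S) : Lagrange.nodalWeight S id x * p.eval x = -c x := by
    rw [show p.eval x = _ from
      Lagrange.eval_interpolate_at_node (v := id) _ Function.injective_id.injOn hx,
      mul_div_cancel₀ _ (hweight x hx)]
  have hp_nonneg (l : ℝ) (hl : l ≤ 0) : 0 ≤ p.eval l := by
    have hlt (x : ℝ) (hx : x ∈ S) : l < x := hl.trans_lt (hS x hx)
    have hnodal : (Lagrange.nodal S id).eval l = ∏ x ∈ S, (x - l) := by
      simp only [Lagrange.eval_nodal, id, ← neg_sub _ l, Finset.prod_neg, hm, pow_mul, neg_one_sq,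
        one_pow, one_mul]
    rw [Lagrange.eval_interpolate_not_at_node (v := id) _ fun x hx => (hlt x hx).ne, hnodal]
    refine mul_nonneg (Finset.prod_nonneg fun x hx => sub_nonneg.2 (hlt x hx).le)
      ((hc (-l) (neg_nonneg.2 hl)).trans_eq (Finset.sum_congr rfl fun x hx => ?_))
    rw [id, ← neg_sub x l, ← sub_eq_add_neg, inv_neg]
    field_simp [hweight x hx]
  have hdd := hf.dividedDifference_eval_mul_nonpos hf0 hS hm hp_deg hp_nonneg
  rw [dividedDifference, ← neg_nonneg, ← Finset.sum_neg_distrib] at hdd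
  exact hdd.trans_eq (Finset.sum_congr rfl fun x hx => by
    rw [← mul_assoc, hp_eval x hx, neg_mul, neg_neg])

theorem sum_mul_nonneg (hf : LoewnerNonpos f) (hf0 : ∀ x, 0 < x → 0 ≤ f x)
    (hS : ∀ x ∈ S, 0 < x) {c : ℝ → ℝ} (hc : ∀ l, 0 ≤ l → 0 ≤ ∑ x ∈ S, c x * (x + l)⁻¹) :
    0 ≤ ∑ x ∈ S, c x * f x := by
  obtain ⟨T, hT, hT_card⟩ :=
    ((Set.Ioi_infinite (0 : ℝ)).sdiff S.finite_toSet).exists_subset_card_eq (S.card + 2)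
  have hdisj : Disjoint S T :=
    Finset.disjoint_right.2 fun x hx => (hT hx).2
  have hsum (g : ℝ → ℝ) :
      ∑ x ∈ S ∪ T, (if x ∈ S then c x else 0) * g x = ∑ x ∈ S, c x * g x := by
    simp only [ite_mul, zero_mul, ← Finset.sum_filter]
    rw [Finset.filter_mem_eq_inter, Finset.union_inter_cancel_left]
  rw [← hsum f]
  refine hf.sum_mul_nonneg_of_card_eq hf0 (m := S.card) (fun x hx => ?_) ?_ fun l hl => ?_
  · exact (Finset.mem_union.1 hx).elim (hS x) fun hx => (hT hx).1
  · rw [Finset.card_union_of_disjoint hdisj, hT_card]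
    ring
  · exact (hc l hl).trans_eq (hsum fun x => (x + l)⁻¹).symm

end LoewnerNonpos

end LoewnerCondition

section PositiveFunctional

-- `L` factors through `Φ` because it vanishes on `ker Φ`, where both `c` and `-c` are constrained.
lemma exists_positiveLinearMap_apply_eq {V W : Type*} [AddCommGroup V] [Module ℝ V]
    [AddCommGroup W] [PartialOrder W] [IsOrderedAddMonoid W] [Module ℝ W] [PosSMulMono ℝ W]
    {Φ : V →ₗ[ℝ] W} {L : V →ₗ[ℝ] ℝ} (hpos : ∀ c, 0 ≤ Φ c → 0 ≤ L c) (hcof : ∀ y, ∃ c, y ≤ Φ c) :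
    ∃ g : W →ₚ[ℝ] ℝ, ∀ c, g (Φ c) = L c := by
  have hL : L ∈ Φ.ker.dualAnnihilator := by
    refine (Submodule.mem_dualAnnihilator L).2 fun c hc => le_antisymm ?_ (hpos c (ge_of_eq hc))
    rw [← neg_nonneg, ← map_neg]
    exact hpos (-c) (ge_of_eq (by rw [map_neg, show Φ c = 0 from hc, neg_zero]))
  rw [← LinearMap.range_dualMap_eq_dualAnnihilator_ker] at hL
  obtain ⟨L', rfl⟩ := hL
  obtain ⟨g, hgL, hg⟩ := riesz_extension (PointedCone.positive ℝ W)
    ⟨Φ.range, L'.domRestrict Φ.range⟩ (by rintro ⟨_, c, rfl⟩ hc; exact hpos c hc) fun y => by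
      obtain ⟨c, hc⟩ := hcof (-y)
      exact ⟨⟨Φ c, c, rfl⟩, neg_le_iff_add_nonneg.1 hc⟩
  exact ⟨.mk₀ g hg, fun c => hgL ⟨Φ c, c, rfl⟩⟩

variable {X : Type*} [TopologicalSpace X] [T2Space X] [CompactSpace X] [MeasurableSpace X]
  [BorelSpace X]

lemma exists_isFiniteMeasure_integral_eq_apply (g : C(X, ℝ) →ₚ[ℝ] ℝ) :
    ∃ ν : Measure X, IsFiniteMeasure ν ∧ ∀ k : C(X, ℝ), ∫ t, k t ∂ν = g k := by
  let Λ : CompactlySupportedContinuousMap X ℝ →ₚ[ℝ] ℝ :=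
    { toFun u := g u.toContinuousMap
      map_add' u v := map_add g u.toContinuousMap v.toContinuousMap
      map_smul' c u := map_smul g c u.toContinuousMap
      monotone' _ _ huv := g.monotone' huv }
  exact ⟨RealRMK.rieszMeasure Λ, inferInstance, fun k =>
    RealRMK.integral_rieszMeasure Λ (CompactlySupportedContinuousMap.continuousMapEquiv k)⟩

theorem exists_isFiniteMeasure_integral_eq {ι : Type*} {k : ι → C(X, ℝ)} {F : ι → ℝ}
    (hpos : ∀ c : ι →₀ ℝ, 0 ≤ Finsupp.linearCombination ℝ k c → 0 ≤ Finsupp.linearCombination ℝ F c)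
    (hone : ∃ c : ι →₀ ℝ, 1 ≤ Finsupp.linearCombination ℝ k c) :
    ∃ ν : Measure X, IsFiniteMeasure ν ∧ ∀ i, ∫ t, k i t ∂ν = F i := by
  obtain ⟨c, hc⟩ := hone
  obtain ⟨g, hg⟩ := exists_positiveLinearMap_apply_eq hpos fun y => by
    refine ⟨‖y‖ • c, fun t => (Real.le_norm_self _).trans ((y.norm_coe_le_norm t).trans ?_)⟩
    rw [map_smul]
    exact le_mul_of_one_le_right (norm_nonneg y) (hc t)
  obtain ⟨ν, hν_fin, hν⟩ := exists_isFiniteMeasure_integral_eq_apply g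
  refine ⟨ν, hν_fin, fun i => ?_⟩
  simpa using (hν _).trans (hg (Finsupp.single i 1))

end PositiveFunctional

section StieltjesMeasure

open unitInterval

/-- The kernel `(x + l)⁻¹`, divided by `(1 + l)⁻¹` and written in the variable `t = (1 + l)⁻¹`, so
that it extends continuously to `t = 0`, that is, to `l = ∞`. -/
noncomputable def stieltjesKernel (x : Set.Ioi (0 : ℝ)) : C(I, ℝ) where
  toFun t := (t * x + (1 - t) : ℝ)⁻¹
  continuous_toFun := by
    refine Continuous.inv₀ (by fun_prop) fun t => ne_of_gt ?_
    rcases t.2.1.eq_or_lt with ht | ht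
    · simp [← ht]
    · exact add_pos_of_pos_of_nonneg (mul_pos ht x.2) (unitInterval.one_minus_nonneg t)

lemma stieltjesKernel_apply (x : Set.Ioi (0 : ℝ)) (t : I) :
    stieltjesKernel x t = (t * x + (1 - t) : ℝ)⁻¹ := rfl

lemma exists_integral_stieltjesKernel_eq {f : ℝ → ℝ}
    (hf : ∀ (S : Finset ℝ) (c : ℝ → ℝ), (∀ x ∈ S, 0 < x) →
      (∀ l, 0 ≤ l → 0 ≤ ∑ x ∈ S, c x * (x + l)⁻¹) → 0 ≤ ∑ x ∈ S, c x * f x) :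
    ∃ ν : Measure I, IsFiniteMeasure ν ∧
      ∀ x : Set.Ioi (0 : ℝ), ∫ t, stieltjesKernel x t ∂ν = f x := by
  refine exists_isFiniteMeasure_integral_eq (fun c hc => ?_)
    ⟨Finsupp.single ⟨1, Set.mem_Ioi.2 one_pos⟩ 1, fun t => by simp [stieltjesKernel_apply]⟩
  have hsum (g : ℝ → ℝ) :
      ∑ x ∈ (c.mapDomain Subtype.val).support, c.mapDomain Subtype.val x * g x =
        ∑ x ∈ c.support, c x * g x :=
    Finsupp.linearCombination_mapDomain ℝ (Subtype.val : Set.Ioi (0 : ℝ) → ℝ) c (v' := g)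
  refine (hf _ (c.mapDomain Subtype.val) (fun x hx => ?_) fun l hl => ?_).trans_eq (hsum f)
  · obtain ⟨y, -, rfl⟩ := Finset.mem_image.1 (Finsupp.mapDomain_support hx)
    exact y.2
  · have hl' : 0 < 1 + l := by linarith
    have hct : 0 ≤ Finsupp.linearCombination ℝ stieltjesKernel c _ :=
      hc ⟨(1 + l)⁻¹, inv_nonneg.2 hl'.le, inv_le_one_of_one_le₀ (by linarith)⟩
    have hkernel (x : ℝ) : ((1 + l)⁻¹ * x + (1 - (1 + l)⁻¹))⁻¹ = (1 + l) * (x + l)⁻¹ := by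
      rw [← inv_inv (1 + l), ← mul_inv, inv_inv]
      congr 1
      field_simp
      ring
    simp only [Finsupp.linearCombination_apply, Finsupp.sum, ContinuousMap.sum_apply,
      ContinuousMap.smul_apply, stieltjesKernel_apply, hkernel, smul_eq_mul,
      mul_left_comm _ (1 + l), ← Finset.mul_sum] at hct
    rw [hsum]
    exact nonneg_of_mul_nonneg_right hct hl'

/-- The measure on `[0, ∞)` obtained from a measure on `[0, 1]` by the substitution
`t = (1 + l)⁻¹` which turns integrals of `stieltjesKernel x` into integrals of `(x + l)⁻¹`. The
atom at `t = 0`, corresponding to `l = ∞`, is dropped, since `0⁻¹ = 0` makes the density vanish. -/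
noncomputable def stieltjesMeasure (ν : Measure I) : Measure ℝ :=
  (ν.withDensity fun t => ((t : ℝ)⁻¹.toNNReal : ENNReal)).map fun t : I => (t : ℝ)⁻¹ - 1

namespace stieltjesMeasure

lemma toNNReal_inv_smul_inv_add (x : Set.Ioi (0 : ℝ)) (t : I) :
    (t : ℝ)⁻¹.toNNReal • ((x : ℝ) + ((t : ℝ)⁻¹ - 1))⁻¹ =
      ({0}ᶜ : Set I).indicator (stieltjesKernel x) t := by
  rw [NNReal.smul_def, Real.coe_toNNReal _ (inv_nonneg.2 t.2.1), smul_eq_mul]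
  rcases eq_or_ne t 0 with rfl | ht
  · simp
  · have ht' : (t : ℝ) ≠ 0 := fun h => ht (Subtype.ext h)
    rw [Set.indicator_of_mem ht, stieltjesKernel_apply, ← mul_inv]
    congr 1
    field_simp

lemma apply_compl_Ici (ν : Measure I) : stieltjesMeasure ν (Set.Ici 0)ᶜ = 0 := by
  rw [stieltjesMeasure, Measure.map_apply (by fun_prop) measurableSet_Ici.compl,
    withDensity_apply_eq_zero' (by fun_prop)]
  refine measure_mono_null (fun t ht => ?_) measure_empty
  have ht_pos : (0 : ℝ) < (t : ℝ)⁻¹ := Real.toNNReal_pos.1 (pos_of_ne_zero (by simpa using ht.1))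
  exact ht.2 (sub_nonneg.2 ((one_le_inv₀ (inv_pos.1 ht_pos)).2 t.2.2))

variable (ν : Measure I) [IsFiniteMeasure ν]

lemma integrable_stieltjesKernel (x : Set.Ioi (0 : ℝ)) : Integrable (stieltjesKernel x) ν :=
  (stieltjesKernel x).continuous.integrable_of_hasCompactSupport (.of_compactSpace _)

lemma integrable_inv_add {x : ℝ} (hx : 0 < x) :
    Integrable (fun l => (x + l)⁻¹) (stieltjesMeasure ν) := by
  rw [stieltjesMeasure, integrable_map_measure (by fun_prop) (by fun_prop),
    integrable_withDensity_iff_integrable_smul (by fun_prop)]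
  simp only [Function.comp_apply, toNNReal_inv_smul_inv_add ⟨x, hx⟩]
  exact (integrable_stieltjesKernel ν _).indicator (measurableSet_singleton 0).compl

lemma add_integral_inv_add {x : ℝ} (hx : 0 < x) :
    ν.real {0} + ∫ l, (x + l)⁻¹ ∂stieltjesMeasure ν = ∫ t, stieltjesKernel ⟨x, hx⟩ t ∂ν := by
  rw [stieltjesMeasure, integral_map (by fun_prop) (by fun_prop),
    integral_withDensity_eq_integral_smul (by fun_prop)]
  simp only [toNNReal_inv_smul_inv_add ⟨x, hx⟩]
  rw [integral_indicator (measurableSet_singleton 0).compl,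
    ← integral_add_compl (measurableSet_singleton 0) (integrable_stieltjesKernel ν _)]
  simp [stieltjesKernel_apply, Measure.real]

end stieltjesMeasure

theorem exists_stieltjes_representation {f : ℝ → ℝ}
    (hf : ∀ (S : Finset ℝ) (c : ℝ → ℝ), (∀ x ∈ S, 0 < x) →
      (∀ l, 0 ≤ l → 0 ≤ ∑ x ∈ S, c x * (x + l)⁻¹) → 0 ≤ ∑ x ∈ S, c x * f x) :
    ∃ (α : ℝ) (μ : Measure ℝ), 0 ≤ α ∧ μ (Set.Ici (0 : ℝ))ᶜ = 0 ∧
      Integrable (fun l : ℝ => (1 + l)⁻¹) μ ∧ ∀ x : ℝ, 0 < x → f x = α + ∫ l, (x + l)⁻¹ ∂μ := by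
  obtain ⟨ν, _, hν⟩ := exists_integral_stieltjesKernel_eq hf
  exact ⟨ν.real {0}, stieltjesMeasure ν, measureReal_nonneg, stieltjesMeasure.apply_compl_Ici ν,
    stieltjesMeasure.integrable_inv_add ν one_pos, fun x hx =>
      (hν ⟨x, hx⟩).symm.trans (stieltjesMeasure.add_integral_inv_add ν hx).symm⟩

end StieltjesMeasure

section StieltjesFunction

lemma norm_inv_add_le {c x l : ℝ} (hc : 0 < c) (hcx : c ≤ x) (hl : 0 ≤ l) :
    ‖(x + l)⁻¹‖ ≤ (1 + c⁻¹) * (1 + l)⁻¹ := by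
  have hx : 1 ≤ c⁻¹ * x := (le_inv_mul_iff₀ hc).2 (by rwa [mul_one])
  have hxl : 0 < x + l := by linarith
  have hcl : 0 ≤ c⁻¹ * l := by positivity
  rw [Real.norm_of_nonneg (inv_nonneg.2 hxl.le), ← div_eq_mul_inv, le_div_iff₀ (by linarith),
    inv_mul_le_iff₀ hxl]
  linarith

variable {A : Type*} [CStarAlgebra A] [PartialOrder A] [StarOrderedRing A]

lemma antitoneOn_cfc_inv_add {l : ℝ} (hl : 0 ≤ l) :
    AntitoneOn (cfc fun x : ℝ => (x + l)⁻¹ : A → A) {T | IsStrictlyPositive T} := by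
  have hcfc {T : A} (hT : IsStrictlyPositive T) :
      cfc (fun x : ℝ => (x + l)⁻¹) T = Ring.inverse (T + algebraMap ℝ A l) := by
    rw [cfc_inv _ _ fun x hx => (add_pos_of_pos_of_nonneg (hT.spectrum_pos hx) hl).ne',
      cfc_add_const l (fun x => x) T, cfc_id' ℝ T]
  have hadd {T : A} (hT : IsStrictlyPositive T) : IsStrictlyPositive (T + algebraMap ℝ A l) :=
    hT.add_nonneg (algebraMap_nonneg A hl)
  intro T hT U hU hTU
  rw [hcfc hT, hcfc hU]
  exact CStarAlgebra.antitoneOn_ringInverse (hadd hT) (hadd hU) (by gcongr)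

variable {μ : Measure ℝ} {T : A}

lemma exists_integrableOn_norm_inv_add_le (hT : IsStrictlyPositive T)
    (hμ : IntegrableOn (fun l : ℝ => (1 + l)⁻¹) (Set.Ici 0) μ) :
    ∃ bound : ℝ → ℝ, IntegrableOn bound (Set.Ici 0) μ ∧
      ∀ᵐ l ∂μ.restrict (Set.Ici 0), ∀ x ∈ spectrum ℝ T, ‖(x + l)⁻¹‖ ≤ bound l := by
  rcases subsingleton_or_nontrivial A with _ | _
  · exact ⟨_, hμ, by simp [spectrum.of_subsingleton]⟩
  obtain ⟨c, hc, hcT⟩ := (CFC.exists_pos_algebraMap_le_iff hT.isSelfAdjoint).2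
    fun x hx => hT.spectrum_pos hx
  rw [algebraMap_le_iff_le_spectrum] at hcT
  exact ⟨_, hμ.const_mul (1 + c⁻¹), ae_restrict_of_forall_mem measurableSet_Ici
    fun l hl x hx => norm_inv_add_le hc (hcT x hx) hl⟩

lemma continuousOn_uncurry_inv_add (hT : IsStrictlyPositive T) :
    ContinuousOn (Function.uncurry fun l x : ℝ => (x + l)⁻¹) (Set.Ici 0 ×ˢ spectrum ℝ T) :=
  ContinuousOn.inv₀ (by fun_prop) fun p hp =>
    (add_pos_of_pos_of_nonneg (hT.spectrum_pos hp.2) hp.1).ne'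

lemma integrableOn_cfc_inv_add (hT : IsStrictlyPositive T)
    (hμ : IntegrableOn (fun l : ℝ => (1 + l)⁻¹) (Set.Ici 0) μ) :
    IntegrableOn (fun l : ℝ => cfc (fun x : ℝ => (x + l)⁻¹) T) (Set.Ici 0) μ := by
  obtain ⟨bound, hbound, hle⟩ := exists_integrableOn_norm_inv_add_le hT hμ
  exact integrableOn_cfc measurableSet_Ici _ bound T (continuousOn_uncurry_inv_add hT) hle hbound.2

lemma cfc_const_add_setIntegral_inv_add (hT : IsStrictlyPositive T)
    (hμ : IntegrableOn (fun l : ℝ => (1 + l)⁻¹) (Set.Ici 0) μ) (α : ℝ) :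
    cfc (fun x : ℝ => α + ∫ l in Set.Ici 0, (x + l)⁻¹ ∂μ) T =
      algebraMap ℝ A α + ∫ l in Set.Ici 0, cfc (fun x : ℝ => (x + l)⁻¹) T ∂μ := by
  obtain ⟨bound, hbound, hle⟩ := exists_integrableOn_norm_inv_add_le hT hμ
  have hcont : ContinuousOn (fun x : ℝ => ∫ l in Set.Ici 0, (x + l)⁻¹ ∂μ) (spectrum ℝ T) :=
    continuousOn_of_dominated (fun x _ => by fun_prop)
      (fun x hx => hle.mono fun l hl => hl x hx) hbound <|
      ae_restrict_of_forall_mem measurableSet_Ici fun l hl =>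
        (continuousOn_uncurry_inv_add hT).comp
          (Continuous.prodMk_right l).continuousOn fun x hx => ⟨hl, hx⟩
  rw [cfc_const_add α _ T hcont, cfc_setIntegral measurableSet_Ici (fun l x : ℝ => (x + l)⁻¹)
    bound T (continuousOn_uncurry_inv_add hT) hle hbound.2]

theorem antitoneOn_cfc_add_integral_inv_add {f : ℝ → ℝ} {α : ℝ}
    (hμ : IntegrableOn (fun l : ℝ => (1 + l)⁻¹) (Set.Ici 0) μ)
    (hf : ∀ x : ℝ, 0 < x → f x = α + ∫ l in Set.Ici 0, (x + l)⁻¹ ∂μ) :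
    AntitoneOn (cfc f : A → A) {T | IsStrictlyPositive T} := by
  have hcfc {T : A} (hT : IsStrictlyPositive T) : cfc f T =
      algebraMap ℝ A α + ∫ l in Set.Ici 0, cfc (fun x : ℝ => (x + l)⁻¹) T ∂μ :=
    (cfc_congr fun x hx => hf x (hT.spectrum_pos hx)).trans
      (cfc_const_add_setIntegral_inv_add hT hμ α)
  refine AntitoneOn.congr ?_ fun T hT => (hcfc hT).symm
  exact antitoneOn_const.add <| integral_antitoneOn_of_integrand_ae
    (ae_restrict_of_forall_mem measurableSet_Ici fun l hl => antitoneOn_cfc_inv_add hl)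
    fun T hT => integrableOn_cfc_inv_add hT hμ

end StieltjesFunction

lemma isStrictlyPositive_iff_spectrum_subset {A : Type*} [CStarAlgebra A] [PartialOrder A]
    [StarOrderedRing A] {T : A} :
    IsStrictlyPositive T ↔
      IsSelfAdjoint T ∧ spectrum ℂ T ⊆ (fun x : ℝ => (x : ℂ)) '' Set.Ioi (0 : ℝ) := by
  rw [CStarAlgebra.isStrictlyPositive_iff_isSelfAdjoint_and_spectrum_pos]
  refine and_congr_right fun hT => ?_
  rw [← hT.spectrumRestricts.algebraMap_image]
  exact (Set.image_subset_image_iff Complex.ofReal_injective).symm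

theorem stmt15_general (hinf : ¬ FiniteDimensional ℂ H) (f : ℝ → ℝ)
    (hf0 : ∀ x : ℝ, 0 < x → 0 ≤ f x) :
    AntitoneOn (cfc f : (H →L[ℂ] H) → H →L[ℂ] H) {T | IsStrictlyPositive T} ↔
      ∃ (α : ℝ) (μ : Measure ℝ), 0 ≤ α ∧ μ (Set.Ici (0 : ℝ))ᶜ = 0 ∧
        Integrable (fun l : ℝ => (1 + l)⁻¹) μ ∧
        ∀ x : ℝ, 0 < x → f x = α + ∫ l, (x + l)⁻¹ ∂μ := by
  constructor
  · intro hf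
    have hloewner := loewnerNonpos_of_antitoneOn_cfc hinf hf
    exact exists_stieltjes_representation fun S c hS hc => hloewner.sum_mul_nonneg hf0 hS hc
  · rintro ⟨α, μ, -, hμ, hint, hf⟩
    have hrestrict : μ.restrict (Set.Ici 0) = μ := Measure.restrict_eq_self_of_ae_mem hμ
    exact antitoneOn_cfc_add_integral_inv_add hint.integrableOn (by rwa [hrestrict])

/-- A continuous, non-negative, not identically zero real function on `(0, ∞)` is operator
monotone decreasing if and only if `f(x) = α + ∫_{[0,∞)} 1/(x+λ) dμ(λ)` with `α ≥ 0` and `μ`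
a positive measure on `[0, ∞)` with `∫ (1+λ)⁻¹ dμ(λ) < ∞`. -/
theorem stmt15 [TopologicalSpace.SeparableSpace H] (hinf : ¬ FiniteDimensional ℂ H)
    (f : ℝ → ℝ) (hf : ContinuousOn f (Set.Ioi (0 : ℝ)))
    (hf0 : ∀ x : ℝ, 0 < x → 0 ≤ f x) (hfne : ∃ x : ℝ, 0 < x ∧ f x ≠ 0) :
    (∀ A B : H →L[ℂ] H, IsSelfAdjoint A → IsSelfAdjoint B →
        spectrum ℂ A ⊆ (fun x : ℝ => (x : ℂ)) '' Set.Ioi (0 : ℝ) →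
        spectrum ℂ B ⊆ (fun x : ℝ => (x : ℂ)) '' Set.Ioi (0 : ℝ) →
        (B - A).IsPositive → (cfc f A - cfc f B).IsPositive)
    ↔ (∃ (α : ℝ) (μ : Measure ℝ), 0 ≤ α ∧ μ (Set.Ici (0 : ℝ))ᶜ = 0 ∧
        Integrable (fun l : ℝ => (1 + l)⁻¹) μ ∧
        ∀ x : ℝ, 0 < x → f x = α + ∫ l, (x + l)⁻¹ ∂μ) := by
  refine .trans ?_ (stmt15_general hinf f hf0)
  simp only [AntitoneOn, Set.mem_ofPred_eq, isStrictlyPositive_iff_spectrum_subset, le_def]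
  exact ⟨fun h A hA B hB => h A B hA.1 hB.1 hA.2 hB.2,
    fun h A B hA hB hsA hsB => h ⟨hA, hsA⟩ ⟨hB, hsB⟩⟩
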